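/- arXiv:2603.27503 — 2 statements merged into one kernel-verified Lean document; each statement's English description precedes it below -/
import Mathlib

section
/- Let κ : ℝ → ℝ be continuous and bounded with finite nonzero limits κ₊ = lim_{x→+∞} κ(x), κ₋ = lim_{x→−∞} κ(x), with κ − κ₊ ∈ L¹([0,∞)) and κ − κ₋ ∈ L¹((−∞,0]). Let E ∈ ℝ with |E| < min(|κ₊|, |κ₋|), and let Ψ = (Ψ^A, Ψ^B) : ℝ → ℝ² be a bounded, not-identically-zero C¹ solution of the first-order system (Ψ^A)′ = κ(x)Ψ^A + EΨ^B, (Ψ^B)′ = −EΨ^A − κ(x)Ψ^B (equivalently, of the real Dirac eigenvalue equation 𝒟^r Ψ = EΨ). Set λ₊ = √(κ₊² − E²) > 0 and λ₋ = −√(κ₋² − E²) < 0, and A_± = [[κ_±, E], [−E, −κ_±]]. Then there exist nonzero vectors p₊, p₋ ∈ ℝ² with A₊ p₊ = −λ₊ p₊ and A₋ p₋ = −λ₋ p₋ such that e^{λ₊ x} Ψ(x) → p₊ as x → +∞ and e^{λ₋ x} Ψ(x) → p₋ as x → −∞. In particular Ψ decays exponentially at both ends of ℝ. -/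
noncomputable section

open Real MeasureTheory Filter

open Set Topology

/-!
Near `+∞` the system is `Ψ' = (A + B x) Ψ` with `A ^ 2 = r ^ 2`, `r = √(κ₊² - E²)`, and `B`
integrable. Split `Ψ` into its components along the eigenspaces of `A` for `r` and `-r`. Since
`Ψ` is bounded, Duhamel's formula expresses the unstable component through the perturbation on
`(x, ∞)`, and the stable one through its value at `X` and the perturbation on `(X, x)`. Once the
`L¹` norm of `B` on `(X, ∞)` is small, estimating both with the weights `exp (r * min x T)`,
uniformly in `T`, gives `Ψ = O(exp (-r * x))`. Fed back into Duhamel's formula, this makes the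
unstable component `o(exp (-r * x))` and the derivative of `exp (r * x)` times the stable one
integrable, so the latter converges. Its limit differs from its value at `X` by at most half of
that value, so a zero limit would force `Ψ X = 0`, which uniqueness for the initial value problem
excludes. The end `-∞` follows by reflection.
-/

section Duhamel

variable {F : Type*} [NormedAddCommGroup F] [NormedSpace ℝ F]

lemma hasDerivAt_exp_smul {w : ℝ → F} {w' : F} {μ c x s : ℝ}
    (hw : HasDerivAt w (μ • w s + w') s) :
    HasDerivAt (fun t => (c * exp (μ * (x - t))) • w t) ((c * exp (μ * (x - s))) • w') s := by
  have hexp : HasDerivAt (fun t => c * exp (μ * (x - t))) (c * (exp (μ * (x - s)) * (μ * -1))) s :=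
    ((((hasDerivAt_id s).const_sub x).const_mul μ).exp).const_mul c
  refine (hexp.smul hw).congr_deriv ?_
  module

lemma norm_exp_smul_sub_le_integral {w g : ℝ → F} {β : ℝ → ℝ} {μ c x a b : ℝ} (hab : a ≤ b)
    (hc : 0 ≤ c) (hw : ∀ s ∈ Icc a b, HasDerivAt w (μ • w s + g s) s)
    (hβ : IntervalIntegrable β volume a b)
    (hg : ∀ s ∈ Ioo a b, c * exp (μ * (x - s)) * ‖g s‖ ≤ β s) :
    ‖(c * exp (μ * (x - b))) • w b - (c * exp (μ * (x - a))) • w a‖ ≤ ∫ s in a..b, β s := by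
  have hderiv (s) (hs : s ∈ Icc a b) := hasDerivAt_exp_smul (c := c) (x := x) (hw s hs)
  refine norm_sub_le_integral_of_norm_deriv_le_of_le hab
    (HasDerivAt.continuousOn hderiv)
    (fun s hs => (hderiv s (Ioo_subset_Icc_self hs)).differentiableAt.differentiableWithinAt)
    (.of_forall fun s hs => ?_) hβ
  rw [(hderiv s (Ioo_subset_Icc_self hs)).deriv, norm_smul, norm_of_nonneg (by positivity)]
  exact hg s hs

lemma exists_tendsto_of_norm_deriv_le [CompleteSpace F] {y y' : ℝ → F} {β : ℝ → ℝ} {X : ℝ}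
    (hy : ∀ x ∈ Ici X, HasDerivAt y (y' x) x) (hβ : IntegrableOn β (Ioi X))
    (hy' : ∀ x ∈ Ioi X, ‖y' x‖ ≤ β x) :
    ∃ L, Tendsto y atTop (𝓝 L) ∧ ‖L - y X‖ ≤ ∫ x in Ioi X, β x := by
  have hbound : ∀ x ∈ Ioi X, ‖deriv y x‖ ≤ β x := fun x hx => by
    rw [(hy x (Ioi_subset_Ici_self hx)).deriv]
    exact hy' x hx
  have hint : IntegrableOn (deriv y) (Ioi X) :=
    Integrable.mono' hβ (aestronglyMeasurable_deriv y _)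
      (ae_restrict_of_forall_mem measurableSet_Ioi hbound)
  have hlim := tendsto_limUnder_of_hasDerivAt_of_integrableOn_Ioi
    (fun x hx => (hy x (Ioi_subset_Ici_self hx)).differentiableAt.hasDerivAt) hint
  refine ⟨_, hlim, ?_⟩
  rw [← integral_Ioi_of_hasDerivAt_of_tendsto'
    (fun x hx => (hy x hx).differentiableAt.hasDerivAt) hint hlim]
  exact norm_integral_le_of_norm_le hβ (ae_restrict_of_forall_mem measurableSet_Ioi hbound)

end Duhamel

lemma le_div_of_forall_le_imp_le {ι : Type*} {h : ι → ℝ} {a q : ℝ} (hbdd : BddAbove (range h))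
    (hq : q < 1) (himp : ∀ C, (∀ i, h i ≤ C) → ∀ i, h i ≤ a + q * C) (i : ι) :
    h i ≤ a / (1 - q) := by
  have : Nonempty ι := ⟨i⟩
  have hsup : ⨆ j, h j ≤ a + q * ⨆ j, h j := ciSup_le (himp _ (le_ciSup hbdd))
  refine (le_ciSup hbdd i).trans ?_
  rw [le_div_iff₀ (by linarith)]
  linarith

/-- A weight on the line that is nondecreasing and grows at most like `exp (r * x)`: exactly what
is needed to bound `ω * ‖·‖` along both the stable and the unstable directions of a system with
rates `±r`. -/
structure IsDichotomyWeight (r : ℝ) (ω : ℝ → ℝ) : Prop where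
  pos : ∀ x, 0 < ω x
  mono : Monotone ω
  mul_exp_le : ∀ ⦃s x⦄, s ≤ x → ω x * exp (-r * (x - s)) ≤ ω s

namespace IsDichotomyWeight

lemma exp_mul {r : ℝ} {φ : ℝ → ℝ} (hr : 0 ≤ r) (hmono : Monotone φ)
    (hφ : ∀ ⦃s x⦄, s ≤ x → φ x ≤ φ s + (x - s)) :
    IsDichotomyWeight r fun x => exp (r * φ x) where
  pos _ := exp_pos _
  mono _ _ h := exp_le_exp.2 (mul_le_mul_of_nonneg_left (hmono h) hr)
  mul_exp_le s x h := by
    rw [← exp_add, exp_le_exp]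
    linarith [mul_le_mul_of_nonneg_left (hφ h) hr]

variable {F : Type*} [NormedAddCommGroup F] [NormedSpace ℝ F]
variable {r : ℝ} {ω β : ℝ → ℝ}

lemma mul_norm_le_of_stable {v g : ℝ → F} {X x : ℝ} (hω : IsDichotomyWeight r ω) (hx : X ≤ x)
    (hv : ∀ s ∈ Icc X x, HasDerivAt v (-r • v s + g s) s)
    (hβ : IntervalIntegrable β volume X x) (hg : ∀ s ∈ Ioo X x, ω s * ‖g s‖ ≤ β s) :
    ω x * ‖v x‖ ≤ ω X * ‖v X‖ + ∫ s in X..x, β s := by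
  have hduhamel := norm_exp_smul_sub_le_integral (x := x) hx (hω.pos x).le hv hβ fun s hs =>
    (mul_le_mul_of_nonneg_right (hω.mul_exp_le hs.2.le) (norm_nonneg _)).trans (hg s hs)
  calc ω x * ‖v x‖ = ‖(ω x * exp (-r * (x - x))) • v x‖ := by
        simp [norm_smul, abs_of_pos (hω.pos x)]
    _ ≤ ‖(ω x * exp (-r * (x - X))) • v X‖ + ∫ s in X..x, β s :=
        (norm_le_norm_add_norm_sub' _ _).trans (by gcongr)
    _ ≤ ω X * ‖v X‖ + ∫ s in X..x, β s := by
        rw [norm_smul, norm_of_nonneg (mul_pos (hω.pos x) (exp_pos _)).le]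
        gcongr
        exact hω.mul_exp_le hx

lemma mul_norm_le_of_unstable {u g : ℝ → F} {M x : ℝ} (hr : 0 < r) (hω : IsDichotomyWeight r ω)
    (hu : ∀ s ∈ Ici x, HasDerivAt u (r • u s + g s) s) (hM : ∀ s ∈ Ici x, ‖u s‖ ≤ M)
    (hβ : IntegrableOn β (Ioi x)) (hg : ∀ s ∈ Ioi x, ω s * ‖g s‖ ≤ β s) :
    ω x * ‖u x‖ ≤ ∫ s in Ioi x, β s := by
  have hfinite : ∀ᶠ T in atTop,
      ω x * ‖u x‖ ≤ ω x * exp (r * (x - T)) * M + ∫ s in x..T, β s := by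
    filter_upwards [eventually_ge_atTop x] with T hT
    have hduhamel := norm_exp_smul_sub_le_integral (x := x) hT (hω.pos x).le
      (fun s hs => hu s hs.1)
      ((intervalIntegrable_iff_integrableOn_Ioc_of_le hT).2 (hβ.mono_set Ioc_subset_Ioi_self))
      fun s hs => (mul_le_mul_of_nonneg_right
        ((mul_le_of_le_one_right (hω.pos x).le
          (exp_le_one_iff.2 (by nlinarith [hs.1]))).trans (hω.mono hs.1.le))
        (norm_nonneg _)).trans (hg s hs.1)
    calc ω x * ‖u x‖ = ‖(ω x * exp (r * (x - x))) • u x‖ := by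
          simp [norm_smul, abs_of_pos (hω.pos x)]
      _ ≤ ‖(ω x * exp (r * (x - T))) • u T‖ + ∫ s in x..T, β s :=
          (norm_le_norm_add_norm_sub _ _).trans (by gcongr)
      _ ≤ ω x * exp (r * (x - T)) * M + ∫ s in x..T, β s := by
          have := mul_pos (hω.pos x) (exp_pos (r * (x - T)))
          rw [norm_smul, norm_of_nonneg this.le]
          gcongr
          exact hM T hT
  have hexp : Tendsto (fun T => exp (r * (x - T))) atTop (𝓝 0) :=
    tendsto_exp_atBot.comp
      ((tendsto_atBot_add_const_left _ x tendsto_neg_atTop_atBot).const_mul_atBot hr)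
  refine ge_of_tendsto ?_ hfinite
  simpa using ((hexp.const_mul (ω x)).mul_const M).add
    (intervalIntegral_tendsto_integral_Ioi x hβ tendsto_id)

end IsDichotomyWeight

section EigenPart

variable {F : Type*} [NormedAddCommGroup F] [NormedSpace ℝ F] {A : F →L[ℝ] F} {r : ℝ}

/-- When `A ^ 2 = r ^ 2` and `r ≠ 0`, this is `2 * r` times the spectral projection of `A` onto its
eigenspace for the eigenvalue `r`; it is left unnormalized to keep `r` out of denominators. -/
def eigenPart (A : F →L[ℝ] F) (r : ℝ) : F →L[ℝ] F := r • ContinuousLinearMap.id ℝ F + A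

lemma eigenPart_apply (A : F →L[ℝ] F) (r : ℝ) (y : F) : eigenPart A r y = r • y + A y := rfl

lemma apply_eigenPart (hA : ∀ y, A (A y) = r ^ 2 • y) (y : F) :
    A (eigenPart A r y) = r • eigenPart A r y := by
  simp only [eigenPart_apply, map_add, map_smul, hA]
  module

lemma eigenPart_apply_self (hA : ∀ y, A (A y) = r ^ 2 • y) (y : F) :
    eigenPart A r (A y) = r • eigenPart A r y := by
  simp only [eigenPart_apply, hA]
  module

lemma eigenPart_sub_eigenPart_neg (A : F →L[ℝ] F) (r : ℝ) (y : F) :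
    eigenPart A r y - eigenPart A (-r) y = (2 * r) • y := by
  simp only [eigenPart_apply]
  module

lemma norm_eigenPart_apply_le (A : F →L[ℝ] F) (r : ℝ) (y : F) :
    ‖eigenPart A r y‖ ≤ (|r| + ‖A‖) * ‖y‖ := by
  rw [eigenPart_apply, add_mul, ← norm_eq_abs, ← norm_smul]
  exact (norm_add_le _ _).trans (by gcongr; exact A.le_opNorm y)

lemma mul_norm_eigenPart_apply_le (A T : F →L[ℝ] F) (r : ℝ) {y : F} {w C : ℝ} (hw : 0 ≤ w)
    (hC : w * ‖y‖ ≤ C) : w * ‖eigenPart A r (T y)‖ ≤ C * ((|r| + ‖A‖) * ‖T‖) :=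
  calc w * ‖eigenPart A r (T y)‖ ≤ w * ((|r| + ‖A‖) * (‖T‖ * ‖y‖)) := by
        gcongr
        exact (norm_eigenPart_apply_le A r _).trans (by gcongr; exact T.le_opNorm y)
    _ = w * ‖y‖ * ((|r| + ‖A‖) * ‖T‖) := by ring
    _ ≤ C * ((|r| + ‖A‖) * ‖T‖) := by gcongr

lemma hasDerivAt_eigenPart (hA : ∀ y, A (A y) = r ^ 2 • y) {Ψ : ℝ → F} {R : F} {x : ℝ}
    (hΨ : HasDerivAt Ψ (A (Ψ x) + R) x) :
    HasDerivAt (fun t => eigenPart A r (Ψ t))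
      (r • eigenPart A r (Ψ x) + eigenPart A r R) x := by
  rw [← eigenPart_apply_self hA, ← map_add]
  exact (eigenPart A r).hasFDerivAt.comp_hasDerivAt x hΨ

end EigenPart

section Levinson

variable {F : Type*} [NormedAddCommGroup F] [NormedSpace ℝ F]
  {A : F →L[ℝ] F} {B : ℝ → F →L[ℝ] F} {Ψ : ℝ → F} {ω : ℝ → ℝ} {r C M X : ℝ}

lemma IsDichotomyWeight.mul_norm_eigenPart_le (hr : 0 < r) (hA : ∀ y, A (A y) = r ^ 2 • y)
    (hΨ : ∀ x ∈ Ici X, HasDerivAt Ψ (A (Ψ x) + B x (Ψ x)) x) (hB : IntegrableOn B (Ioi X))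
    (hM : ∀ x ∈ Ici X, ‖Ψ x‖ ≤ M) (hω : IsDichotomyWeight r ω)
    (hC : ∀ x ∈ Ici X, ω x * ‖Ψ x‖ ≤ C) {x : ℝ} (hx : x ∈ Ici X) :
    ω x * ‖eigenPart A r (Ψ x)‖ ≤ ∫ s in Ioi x, C * ((|r| + ‖A‖) * ‖B s‖) :=
  hω.mul_norm_le_of_unstable hr
    (fun s hs => hasDerivAt_eigenPart hA (hΨ s (Ici_subset_Ici.2 hx hs)))
    (fun s hs => (norm_eigenPart_apply_le A r _).trans
      (mul_le_mul_of_nonneg_left (hM s (Ici_subset_Ici.2 hx hs)) (by positivity)))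
    (((hB.mono_set (Ioi_subset_Ioi hx)).norm.const_mul _).const_mul _)
    (fun s hs => mul_norm_eigenPart_apply_le A (B s) r (hω.pos s).le
      (hC s (le_trans hx (mem_Ioi.1 hs).le)))

lemma IsDichotomyWeight.mul_norm_eigenPart_neg_le (hA : ∀ y, A (A y) = r ^ 2 • y)
    (hΨ : ∀ x ∈ Ici X, HasDerivAt Ψ (A (Ψ x) + B x (Ψ x)) x) (hB : IntegrableOn B (Ioi X))
    (hω : IsDichotomyWeight r ω) (hC : ∀ x ∈ Ici X, ω x * ‖Ψ x‖ ≤ C) {x : ℝ} (hx : x ∈ Ici X) :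
    ω x * ‖eigenPart A (-r) (Ψ x)‖ ≤
      ω X * ‖eigenPart A (-r) (Ψ X)‖ + ∫ s in X..x, C * ((|r| + ‖A‖) * ‖B s‖) :=
  hω.mul_norm_le_of_stable hx
    (fun s hs => hasDerivAt_eigenPart (by simpa using hA) (hΨ s hs.1))
    ((intervalIntegrable_iff_integrableOn_Ioc_of_le hx).2
      (((hB.mono_set Ioc_subset_Ioi_self).norm.const_mul _).const_mul _))
    (fun s hs => by
      simpa using mul_norm_eigenPart_apply_le A (B s) (-r) (hω.pos s).le (hC s hs.1.le))

lemma IsDichotomyWeight.two_mul_mul_norm_le (hr : 0 < r) (hA : ∀ y, A (A y) = r ^ 2 • y)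
    (hΨ : ∀ x ∈ Ici X, HasDerivAt Ψ (A (Ψ x) + B x (Ψ x)) x) (hB : IntegrableOn B (Ioi X))
    (hM : ∀ x ∈ Ici X, ‖Ψ x‖ ≤ M) (hω : IsDichotomyWeight r ω)
    (hC : ∀ x ∈ Ici X, ω x * ‖Ψ x‖ ≤ C) {x : ℝ} (hx : x ∈ Ici X) :
    2 * r * (ω x * ‖Ψ x‖) ≤
      ω X * ‖eigenPart A (-r) (Ψ X)‖ + C * ((|r| + ‖A‖) * ∫ s in Ioi X, ‖B s‖) := by
  have hint : IntegrableOn (fun s => C * ((|r| + ‖A‖) * ‖B s‖)) (Ioi X) :=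
    (hB.norm.const_mul _).const_mul _
  calc 2 * r * (ω x * ‖Ψ x‖)
      = ω x * ‖eigenPart A r (Ψ x) - eigenPart A (-r) (Ψ x)‖ := by
        rw [eigenPart_sub_eigenPart_neg, norm_smul, norm_of_nonneg (by positivity)]
        ring
    _ ≤ ω x * ‖eigenPart A r (Ψ x)‖ + ω x * ‖eigenPart A (-r) (Ψ x)‖ := by
        rw [← mul_add]
        exact mul_le_mul_of_nonneg_left (norm_sub_le _ _) (hω.pos x).le
    _ ≤ (∫ s in Ioi x, C * ((|r| + ‖A‖) * ‖B s‖)) + (ω X * ‖eigenPart A (-r) (Ψ X)‖ +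
          ∫ s in X..x, C * ((|r| + ‖A‖) * ‖B s‖)) :=
        add_le_add (hω.mul_norm_eigenPart_le hr hA hΨ hB hM hC hx)
          (hω.mul_norm_eigenPart_neg_le hA hΨ hB hC hx)
    _ = ω X * ‖eigenPart A (-r) (Ψ X)‖ + ∫ s in Ioi X, C * ((|r| + ‖A‖) * ‖B s‖) := by
        rw [← intervalIntegral.integral_interval_add_Ioi hint (hint.mono_set (Ioi_subset_Ioi hx))]
        ring
    _ = _ := by rw [integral_const_mul, integral_const_mul]

-- The weight `exp (r * min x T)` is bounded, so the supremum of `ω * ‖Ψ‖` is finite and can be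
-- absorbed; the resulting bound does not depend on `T`.
lemma exp_mul_norm_le_of_integral_norm_le (hr : 0 < r) (hA : ∀ y, A (A y) = r ^ 2 • y)
    (hΨ : ∀ x ∈ Ici X, HasDerivAt Ψ (A (Ψ x) + B x (Ψ x)) x) (hB : IntegrableOn B (Ioi X))
    (hM : ∀ x ∈ Ici X, ‖Ψ x‖ ≤ M) (hsmall : (|r| + ‖A‖) * ∫ s in Ioi X, ‖B s‖ ≤ r)
    {x : ℝ} (hx : x ∈ Ici X) :
    exp (r * x) * ‖Ψ x‖ ≤ exp (r * X) * ‖eigenPart A (-r) (Ψ X)‖ / r := by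
  set a := exp (r * X) * ‖eigenPart A (-r) (Ψ X)‖
  have hω : IsDichotomyWeight r fun s => exp (r * min s x) :=
    .exp_mul hr.le (fun _ _ h => min_le_min_right x h) (fun s t h => by grind)
  have hbdd : BddAbove (range fun s : Ici X => exp (r * min (s : ℝ) x) * ‖Ψ s‖) := by
    refine ⟨exp (r * x) * M, ?_⟩
    rintro _ ⟨s, rfl⟩
    have := hM s s.2
    dsimp only
    gcongr
    exact min_le_right _ _
  have himprove (C : ℝ) (hC : ∀ s : Ici X, exp (r * min (s : ℝ) x) * ‖Ψ s‖ ≤ C) (s : Ici X) :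
      exp (r * min (s : ℝ) x) * ‖Ψ s‖ ≤ a / (2 * r) + 1 / 2 * C := by
    have hC0 : 0 ≤ C := le_trans (by positivity) (hC s)
    have hbound := hω.two_mul_mul_norm_le hr hA hΨ hB hM (fun t ht => hC ⟨t, ht⟩) s.2
    rw [min_eq_left (mem_Ici.1 hx)] at hbound
    calc exp (r * min (s : ℝ) x) * ‖Ψ s‖ ≤ (a + C * r) / (2 * r) := by
          rw [le_div_iff₀' (by positivity)]
          exact hbound.trans (by gcongr)
      _ = a / (2 * r) + 1 / 2 * C := by field_simp
  calc exp (r * x) * ‖Ψ x‖ ≤ a / (2 * r) / (1 - 1 / 2) := by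
        simpa using le_div_of_forall_le_imp_le hbdd (by norm_num) himprove ⟨x, hx⟩
    _ = a / r := by field_simp; norm_num

lemma tendsto_exp_smul_eigenPart (hr : 0 < r) (hA : ∀ y, A (A y) = r ^ 2 • y)
    (hΨ : ∀ x ∈ Ici X, HasDerivAt Ψ (A (Ψ x) + B x (Ψ x)) x) (hB : IntegrableOn B (Ioi X))
    (hM : ∀ x ∈ Ici X, ‖Ψ x‖ ≤ M) (hC : ∀ x ∈ Ici X, exp (r * x) * ‖Ψ x‖ ≤ C) :
    Tendsto (fun x => exp (r * x) • eigenPart A r (Ψ x)) atTop (𝓝 0) := by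
  have hω : IsDichotomyWeight r fun x => exp (r * x) :=
    .exp_mul hr.le monotone_id fun s x _ => by simp
  refine squeeze_zero_norm' (a := fun x => ∫ s in Ioi x, C * ((|r| + ‖A‖) * ‖B s‖)) ?_
    (tendsto_integral_Ioi_zero tendsto_id)
  filter_upwards [eventually_ge_atTop X] with x hx
  rw [norm_smul, norm_of_nonneg (exp_pos _).le]
  exact hω.mul_norm_eigenPart_le hr hA hΨ hB hM hC hx

lemma exists_tendsto_exp_smul_eigenPart_neg [CompleteSpace F] (hA : ∀ y, A (A y) = r ^ 2 • y)
    (hΨ : ∀ x ∈ Ici X, HasDerivAt Ψ (A (Ψ x) + B x (Ψ x)) x) (hB : IntegrableOn B (Ioi X))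
    (hC : ∀ x ∈ Ici X, exp (r * x) * ‖Ψ x‖ ≤ C) :
    ∃ L, Tendsto (fun x => exp (r * x) • eigenPart A (-r) (Ψ x)) atTop (𝓝 L) ∧
      ‖L - exp (r * X) • eigenPart A (-r) (Ψ X)‖ ≤
        C * ((|r| + ‖A‖) * ∫ s in Ioi X, ‖B s‖) := by
  rw [← integral_const_mul, ← integral_const_mul]
  refine exists_tendsto_of_norm_deriv_le
    (y' := fun x => exp (r * x) • eigenPart A (-r) (B x (Ψ x))) (fun x hx => ?_)
    ((hB.norm.const_mul _).const_mul _) (fun x hx => ?_)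
  · simpa using hasDerivAt_exp_smul (c := 1) (x := 0)
      (hasDerivAt_eigenPart (r := -r) (by simpa using hA) (hΨ x hx))
  · rw [norm_smul, norm_of_nonneg (exp_pos _).le]
    simpa using mul_norm_eigenPart_apply_le A (B x) (-r) (exp_pos _).le
      (hC x (Ioi_subset_Ici_self hx))

lemma exists_tendsto_exp_smul [CompleteSpace F] (hr : 0 < r) (hA : ∀ y, A (A y) = r ^ 2 • y)
    (hΨ : ∀ x ∈ Ici X, HasDerivAt Ψ (A (Ψ x) + B x (Ψ x)) x) (hB : IntegrableOn B (Ioi X))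
    (hM : ∀ x ∈ Ici X, ‖Ψ x‖ ≤ M) (hC : ∀ x ∈ Ici X, exp (r * x) * ‖Ψ x‖ ≤ C) :
    ∃ p, A p = -r • p ∧ Tendsto (fun x => exp (r * x) • Ψ x) atTop (𝓝 p) := by
  have hunstable := tendsto_exp_smul_eigenPart hr hA hΨ hB hM hC
  obtain ⟨L, hstable, -⟩ := exists_tendsto_exp_smul_eigenPart_neg hA hΨ hB hC
  have hAL : A L = -r • L := by
    refine tendsto_nhds_unique ((A.continuous.tendsto L).comp hstable)
      ((hstable.const_smul (-r)).congr fun x => ?_)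
    rw [Function.comp_apply, map_smul, apply_eigenPart (by simpa using hA), smul_comm]
  refine ⟨(2 * r)⁻¹ • (0 - L), by simp [hAL, smul_comm r], ?_⟩
  refine ((hunstable.sub hstable).const_smul (2 * r)⁻¹).congr fun x => ?_
  rw [← smul_sub, eigenPart_sub_eigenPart_neg, smul_comm, inv_smul_smul₀ (by positivity)]

-- The perturbation changes the rescaled stable component by at most half of its value at `X`.
lemma eq_zero_of_tendsto_exp_smul_zero [CompleteSpace F] (hr : 0 < r)
    (hA : ∀ y, A (A y) = r ^ 2 • y)
    (hΨ : ∀ x ∈ Ici X, HasDerivAt Ψ (A (Ψ x) + B x (Ψ x)) x) (hB : IntegrableOn B (Ioi X))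
    (hM : ∀ x ∈ Ici X, ‖Ψ x‖ ≤ M) (hsmall : (|r| + ‖A‖) * ∫ s in Ioi X, ‖B s‖ ≤ r / 2)
    (hlim : Tendsto (fun x => exp (r * x) • Ψ x) atTop (𝓝 0)) : Ψ X = 0 := by
  have hC (x : ℝ) (hx : x ∈ Ici X) :=
    exp_mul_norm_le_of_integral_norm_le hr hA hΨ hB hM (by linarith) hx
  obtain ⟨L, hstable, hL⟩ := exists_tendsto_exp_smul_eigenPart_neg hA hΨ hB hC
  have hL0 : L = 0 := tendsto_nhds_unique hstable <| by
    simpa [Function.comp_def] using ((eigenPart A (-r)).continuous.tendsto 0).comp hlim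
  set a := exp (r * X) * ‖eigenPart A (-r) (Ψ X)‖
  have ha_half : a ≤ a / 2 :=
    calc a = ‖L - exp (r * X) • eigenPart A (-r) (Ψ X)‖ := by
          rw [hL0, zero_sub, norm_neg, norm_smul, norm_of_nonneg (exp_pos _).le]
      _ ≤ a / r * (r / 2) := hL.trans (by gcongr)
      _ = a / 2 := by field_simp
  have ha0 : a = 0 := le_antisymm (by linarith) (by positivity)
  have hX : exp (r * X) * ‖Ψ X‖ ≤ 0 := by simpa [ha0] using hC X self_mem_Ici
  exact norm_le_zero_iff.1 (nonpos_of_mul_nonpos_right hX (exp_pos _))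

theorem exists_tendsto_exp_smul_atTop [CompleteSpace F] (hr : 0 < r)
    (hA : ∀ y, A (A y) = r ^ 2 • y)
    (hΨ : ∀ x ∈ Ici X, HasDerivAt Ψ (A (Ψ x) + B x (Ψ x)) x) (hB : IntegrableOn B (Ioi X))
    (hM : ∀ x ∈ Ici X, ‖Ψ x‖ ≤ M) :
    ∃ p, A p = -r • p ∧ Tendsto (fun x => exp (r * x) • Ψ x) atTop (𝓝 p) ∧
      (p = 0 → ∀ᶠ x in atTop, Ψ x = 0) := by
  have htail : Tendsto (fun x => (|r| + ‖A‖) * ∫ s in Ioi x, ‖B s‖) atTop (𝓝 0) := by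
    simpa using (tendsto_integral_Ioi_zero tendsto_id).const_mul (|r| + ‖A‖)
  obtain ⟨Y, hY⟩ := eventually_atTop.1
    ((htail.eventually_le_const (half_pos hr)).and (eventually_ge_atTop X))
  have hΨ' (x) (hx : x ∈ Ici Y) : ∀ s ∈ Ici x, HasDerivAt Ψ (A (Ψ s) + B s (Ψ s)) s :=
    fun s hs => hΨ s ((hY x hx).2.trans hs)
  have hB' (x) (hx : x ∈ Ici Y) : IntegrableOn B (Ioi x) :=
    hB.mono_set (Ioi_subset_Ioi (hY x hx).2)
  have hM' (x) (hx : x ∈ Ici Y) : ∀ s ∈ Ici x, ‖Ψ s‖ ≤ M := fun s hs => hM s ((hY x hx).2.trans hs)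
  have hY0 : Y ∈ Ici Y := self_mem_Ici
  obtain ⟨p, hAp, hp⟩ := exists_tendsto_exp_smul hr hA (hΨ' Y hY0) (hB' Y hY0) (hM' Y hY0)
    fun x hx => exp_mul_norm_le_of_integral_norm_le hr hA (hΨ' Y hY0) (hB' Y hY0) (hM' Y hY0)
      (by linarith [(hY Y le_rfl).1]) hx
  refine ⟨p, hAp, hp, fun hp0 => ?_⟩
  filter_upwards [eventually_ge_atTop Y] with x hx
  exact eq_zero_of_tendsto_exp_smul_zero hr hA (hΨ' x hx) (hB' x hx) (hM' x hx) (hY x hx).1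
    (hp0 ▸ hp)

theorem exists_tendsto_exp_smul_atBot [CompleteSpace F] (hr : 0 < r)
    (hA : ∀ y, A (A y) = r ^ 2 • y)
    (hΨ : ∀ x ∈ Iic X, HasDerivAt Ψ (A (Ψ x) + B x (Ψ x)) x) (hB : IntegrableOn B (Iio X))
    (hM : ∀ x ∈ Iic X, ‖Ψ x‖ ≤ M) :
    ∃ p, A p = r • p ∧ Tendsto (fun x => exp (-r * x) • Ψ x) atBot (𝓝 p) ∧
      (p = 0 → ∀ᶠ x in atBot, Ψ x = 0) := by
  have hneg {x : ℝ} (hx : x ∈ Ici (-X)) : -x ∈ Iic X := mem_Iic.2 (neg_le.1 hx)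
  obtain ⟨p, hAp, hp, hp0⟩ := exists_tendsto_exp_smul_atTop (A := -A) (B := fun x => -B (-x))
    (Ψ := fun x => Ψ (-x)) (X := -X) hr (by simpa using hA)
    (fun x hx => ((hΨ _ (hneg hx)).scomp x (hasDerivAt_neg x)).congr_deriv (by simp))
    (IntegrableOn.comp_neg_Ioi (by simpa using hB)).neg (fun x hx => hM _ (hneg hx))
  refine ⟨p, by simpa using hAp, ?_, fun h => ?_⟩
  · simpa [Function.comp_def] using hp.comp tendsto_neg_atBot_atTop
  · simpa using tendsto_neg_atBot_atTop.eventually (hp0 h)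

end Levinson

lemma eq_zero_of_hasDerivAt_clm_apply {F : Type*} [NormedAddCommGroup F] [NormedSpace ℝ F]
    {A : ℝ → F →L[ℝ] F} (hA : Continuous A) {Ψ : ℝ → F}
    (hΨ : ∀ x, HasDerivAt Ψ (A x (Ψ x)) x) {x₀ : ℝ} (h₀ : Ψ x₀ = 0) : Ψ = 0 := by
  funext x
  set a := min x₀ x - 1
  set b := max x₀ x + 1
  obtain ⟨K, hK⟩ := isCompact_Icc.exists_bound_of_continuousOn (s := Icc a b) hA.continuousOn
  have hLipschitz (t) (ht : t ∈ Ioo a b) : LipschitzOnWith K.toNNReal (A t) univ :=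
    ((A t).lipschitz.weaken (NNReal.le_toNNReal_of_coe_le
      (hK t (Ioo_subset_Icc_self ht)))).lipschitzOnWith
  exact ODE_solution_unique_of_mem_Ioo (v := fun t => A t) hLipschitz
    (show x₀ ∈ Ioo a b by grind) (fun t _ => ⟨hΨ t, mem_univ _⟩)
    (fun t _ => ⟨by simp, mem_univ _⟩) h₀
    (show x ∈ Ioo a b by grind)

section Dirac

variable {κ : ℝ → ℝ} {k E : ℝ}

/-- The coefficient matrix `[[k, E], [-E, -k]]` of the real Dirac system with potential value `k`
and energy `E`, acting on pairs. -/
def diracMatrix (k E : ℝ) : ℝ × ℝ →L[ℝ] ℝ × ℝ :=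
  (k • ContinuousLinearMap.fst ℝ ℝ ℝ + E • ContinuousLinearMap.snd ℝ ℝ ℝ).prod
    (-E • ContinuousLinearMap.fst ℝ ℝ ℝ - k • ContinuousLinearMap.snd ℝ ℝ ℝ)

lemma diracMatrix_apply (k E : ℝ) (y : ℝ × ℝ) :
    diracMatrix k E y = (k * y.1 + E * y.2, -E * y.1 - k * y.2) := rfl

lemma diracMatrix_apply_diracMatrix_apply (hE : |E| ≤ |k|) (y : ℝ × ℝ) :
    diracMatrix k E (diracMatrix k E y) = √(k ^ 2 - E ^ 2) ^ 2 • y := by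
  rw [sq_sqrt (sub_nonneg.2 (sq_le_sq.2 hE))]
  simp only [diracMatrix_apply, Prod.ext_iff, Prod.smul_fst, Prod.smul_snd, smul_eq_mul]
  constructor <;> ring

lemma diracMatrix_eq_add_smul (k k₀ E : ℝ) :
    diracMatrix k E = diracMatrix k₀ E + (k - k₀) • diracMatrix 1 0 := by
  refine ContinuousLinearMap.ext fun y => ?_
  simp only [add_apply, smul_apply, diracMatrix_apply, Prod.ext_iff, Prod.fst_add,
    Prod.snd_add, Prod.smul_fst, Prod.smul_snd, smul_eq_mul]
  constructor <;> ring

lemma continuous_diracMatrix (hκ : Continuous κ) (E : ℝ) :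
    Continuous fun x => diracMatrix (κ x) E := by
  simp only [fun x => diracMatrix_eq_add_smul (κ x) 0 E]
  fun_prop

lemma diracMatrix_apply_eq_smul_iff {μ : ℝ} {p : ℝ × ℝ} :
    diracMatrix k E p = μ • p ↔
      k * p.1 + E * p.2 = μ * p.1 ∧ -E * p.1 - k * p.2 = μ * p.2 := by
  simp [diracMatrix_apply, Prod.ext_iff]

lemma hasDerivAt_diracMatrix_apply {Ψ : ℝ → ℝ × ℝ} {x : ℝ} (hΨ : DifferentiableAt ℝ Ψ x)
    (hode : deriv (fun y => (Ψ y).1) x = k * (Ψ x).1 + E * (Ψ x).2 ∧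
      deriv (fun y => (Ψ y).2) x = -E * (Ψ x).1 - k * (Ψ x).2) :
    HasDerivAt Ψ (diracMatrix k E (Ψ x)) x := by
  rw [diracMatrix_apply, ← hode.1, ← hode.2]
  exact hΨ.fst.hasDerivAt.prodMk hΨ.snd.hasDerivAt

end Dirac

theorem real_dirac_exponential_asymptotics_general
    (κ : ℝ → ℝ) (hκcont : Continuous κ) (κp κm : ℝ)
    (hintp : IntegrableOn (fun x => κ x - κp) (Set.Ici 0))
    (hintm : IntegrableOn (fun x => κ x - κm) (Set.Iic 0))
    (E : ℝ) (hE : |E| < min |κp| |κm|)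
    (Ψ : ℝ → ℝ × ℝ) (hΨ : Differentiable ℝ Ψ)
    (hbdd : ∃ B : ℝ, ∀ x, ‖Ψ x‖ ≤ B) (hne : ∃ x, Ψ x ≠ 0)
    (hode : ∀ x : ℝ,
      deriv (fun y => (Ψ y).1) x = κ x * (Ψ x).1 + E * (Ψ x).2 ∧
      deriv (fun y => (Ψ y).2) x = -E * (Ψ x).1 - κ x * (Ψ x).2) :
    0 < Real.sqrt (κp ^ 2 - E ^ 2) ∧ 0 < Real.sqrt (κm ^ 2 - E ^ 2) ∧
    ∃ pp pm : ℝ × ℝ, pp ≠ 0 ∧ pm ≠ 0 ∧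
      (κp * pp.1 + E * pp.2 = -Real.sqrt (κp ^ 2 - E ^ 2) * pp.1 ∧
        -E * pp.1 - κp * pp.2 = -Real.sqrt (κp ^ 2 - E ^ 2) * pp.2) ∧
      (κm * pm.1 + E * pm.2 = Real.sqrt (κm ^ 2 - E ^ 2) * pm.1 ∧
        -E * pm.1 - κm * pm.2 = Real.sqrt (κm ^ 2 - E ^ 2) * pm.2) ∧
      Tendsto (fun x => Real.exp (Real.sqrt (κp ^ 2 - E ^ 2) * x) • Ψ x) atTop (nhds pp) ∧
      Tendsto (fun x => Real.exp (-Real.sqrt (κm ^ 2 - E ^ 2) * x) • Ψ x) atBot (nhds pm) := by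
  obtain ⟨M, hM⟩ := hbdd
  obtain ⟨hEp, hEm⟩ := lt_min_iff.1 hE
  have hrp : 0 < √(κp ^ 2 - E ^ 2) := sqrt_pos.2 (sub_pos.2 (sq_lt_sq.2 hEp))
  have hrm : 0 < √(κm ^ 2 - E ^ 2) := sqrt_pos.2 (sub_pos.2 (sq_lt_sq.2 hEm))
  have hderiv (x : ℝ) := hasDerivAt_diracMatrix_apply (hΨ x) (hode x)
  have hsplit (k₀ x : ℝ) :
      HasDerivAt Ψ (diracMatrix k₀ E (Ψ x) + ((κ x - k₀) • diracMatrix 1 0) (Ψ x)) x :=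
    (hderiv x).congr_deriv (by rw [diracMatrix_eq_add_smul _ k₀]; rfl)
  have hne0 (x : ℝ) : Ψ x ≠ 0 := fun h0 =>
    hne.elim fun y hy => hy <| congrFun
      (eq_zero_of_hasDerivAt_clm_apply (continuous_diracMatrix hκcont E) hderiv h0) y
  obtain ⟨pp, hApp, hpp, hpp0⟩ := exists_tendsto_exp_smul_atTop hrp
    (diracMatrix_apply_diracMatrix_apply hEp.le) (fun x _ => hsplit κp x)
    ((hintp.mono_set Ioi_subset_Ici_self).smul_const (diracMatrix 1 0)) (fun x _ => hM x)
  obtain ⟨pm, hApm, hpm, hpm0⟩ := exists_tendsto_exp_smul_atBot hrm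
    (diracMatrix_apply_diracMatrix_apply hEm.le) (fun x _ => hsplit κm x)
    ((hintm.mono_set Iio_subset_Iic_self).smul_const (diracMatrix 1 0)) (fun x _ => hM x)
  exact ⟨hrp, hrm, pp, pm, fun h => (hpp0 h).exists.elim hne0, fun h => (hpm0 h).exists.elim hne0,
    diracMatrix_apply_eq_smul_iff.1 hApp, diracMatrix_apply_eq_smul_iff.1 hApm, hpp, hpm⟩

/-- Any bounded, not-identically-zero `C¹` solution of the real Dirac system
`(Ψ^A)′ = κΨ^A + EΨ^B`, `(Ψ^B)′ = −EΨ^A − κΨ^B` (with `κ` bounded continuous, `L¹`-converging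
to nonzero limits `κ₊, κ₋` at `±∞`, and `|E| < min(|κ₊|,|κ₋|)`) decays exponentially at both
ends: with `λ₊ = √(κ₊² − E²)` and `λ₋ = −√(κ₋² − E²)`, the rescaled solutions
`e^{λ₊x}Ψ(x)` and `e^{λ₋x}Ψ(x)` converge to nonzero eigenvectors `p₊, p₋` of
`A₊ = [[κ₊,E],[−E,−κ₊]]`, `A₋ = [[κ₋,E],[−E,−κ₋]]` for the eigenvalues `−λ₊`, `−λ₋`. -/
theorem real_dirac_exponential_asymptotics
    (κ : ℝ → ℝ) (hκcont : Continuous κ) (hκbd : ∃ B : ℝ, ∀ x, |κ x| ≤ B)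
    (κp κm : ℝ)
    (hp : Tendsto κ atTop (nhds κp)) (hm : Tendsto κ atBot (nhds κm))
    (hp0 : κp ≠ 0) (hm0 : κm ≠ 0)
    (hintp : IntegrableOn (fun x => κ x - κp) (Set.Ici 0))
    (hintm : IntegrableOn (fun x => κ x - κm) (Set.Iic 0))
    (E : ℝ) (hE : |E| < min |κp| |κm|)
    (Ψ : ℝ → ℝ × ℝ) (hΨ : ContDiff ℝ 1 Ψ)
    (hbdd : ∃ B : ℝ, ∀ x, ‖Ψ x‖ ≤ B) (hne : ∃ x, Ψ x ≠ 0)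
    (hode : ∀ x : ℝ,
      deriv (fun y => (Ψ y).1) x = κ x * (Ψ x).1 + E * (Ψ x).2 ∧
      deriv (fun y => (Ψ y).2) x = -E * (Ψ x).1 - κ x * (Ψ x).2) :
    0 < Real.sqrt (κp ^ 2 - E ^ 2) ∧ 0 < Real.sqrt (κm ^ 2 - E ^ 2) ∧
    ∃ pp pm : ℝ × ℝ, pp ≠ 0 ∧ pm ≠ 0 ∧
      (κp * pp.1 + E * pp.2 = -Real.sqrt (κp ^ 2 - E ^ 2) * pp.1 ∧
        -E * pp.1 - κp * pp.2 = -Real.sqrt (κp ^ 2 - E ^ 2) * pp.2) ∧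
      (κm * pm.1 + E * pm.2 = Real.sqrt (κm ^ 2 - E ^ 2) * pm.1 ∧
        -E * pm.1 - κm * pm.2 = Real.sqrt (κm ^ 2 - E ^ 2) * pm.2) ∧
      Tendsto (fun x => Real.exp (Real.sqrt (κp ^ 2 - E ^ 2) * x) • Ψ x) atTop (nhds pp) ∧
      Tendsto (fun x => Real.exp (-Real.sqrt (κm ^ 2 - E ^ 2) * x) • Ψ x) atBot (nhds pm) :=
  real_dirac_exponential_asymptotics_general κ hκcont κp κm hintp hintm E hE Ψ
    (hΨ.differentiable one_ne_zero) hbdd hne hode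
end
end

section
/- Let A be a constant real 2×2 matrix with real eigenvalues λ₁ < 0 < λ₂ and corresponding nonzero eigenvectors p₁, p₂ ∈ ℝ², and let R : [0,∞) → ℝ^{2×2} be continuous with ∫₀^∞ ‖R(t)‖ dt < ∞. Then: (i) any two bounded C¹ solutions φ, ψ : [0,∞) → ℝ² of φ′(t) = (A + R(t)) φ(t) are linearly dependent over ℝ; and (ii) every bounded C¹ solution φ of this system satisfies lim_{t→∞} e^{−λ₁ t} φ(t) = c p₁ for some c ∈ ℝ. That is, the bounded solutions form a space of dimension at most one, spanned by the exponentially decaying solution with asymptotic direction p₁. -/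
noncomputable section

open Real MeasureTheory Filter

/-- A fixed matrix norm on real 2×2 matrices (sum of absolute values of the entries). -/
def matNorm (M : Matrix (Fin 2) (Fin 2) ℝ) : ℝ := ∑ i : Fin 2, ∑ j : Fin 2, |M i j|

/-!
In eigenvector coordinates the system reads `x' = λ₁ x + f`, `y' = λ₂ y + g` with
`|f|, |g| ≤ ρ (|x| + |y|)` and `ρ` integrable on `[0, ∞)`. Along a bounded solution, variation of
constants gives `x` forwards from a time `T` and, since the growing mode must be absent, `y`
backwards from `∞`. If `∫_T^∞ ρ ≤ 1/2`, the supremum of `e^{-λ₁ t} (|x| + |y|)` over `t ≥ T` can be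
absorbed, leaving `e^{-λ₁ t} (|x(t)| + |y(t)|) ≤ 2 e^{-λ₁ T} |x(T)|`. Hence a bounded solution
is determined by the single number `x(T)`, and `e^{-λ₁ t} x` has an integrable derivative while
`e^{-λ₁ t} y` is bounded by a multiple of `∫_t^∞ ρ`.
-/

open Set

section ExponentialWeights

variable {E : Type*} [NormedAddCommGroup E] [NormedSpace ℝ E] {x : ℝ → E} {σ w : ℝ → ℝ}
  {a c s t : ℝ}

lemma hasDerivAt_exp_smul_s8 (hx : DifferentiableAt ℝ x t) :
    HasDerivAt (fun r => exp (a * (r - c)) • x r)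
      (exp (a * (t - c)) • (deriv x t + a • x t)) t := by
  have hexp : HasDerivAt (fun r => exp (a * (r - c))) (exp (a * (t - c)) * (a * 1)) t :=
    (((hasDerivAt_id t).sub_const c).const_mul a).exp
  exact (hexp.smul hx.hasDerivAt).congr_deriv (by module)

lemma mul_norm_exp_smul_sub_le_integral {K : ℝ} (hK : 0 ≤ K) (hst : s ≤ t)
    (hx : ∀ r ∈ Icc s t, DifferentiableAt ℝ x r)
    (hσ : ∀ r ∈ Icc s t, K * exp (a * (r - c)) * ‖deriv x r + a • x r‖ ≤ σ r)
    (hσi : IntervalIntegrable σ volume s t) :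
    K * ‖exp (a * (t - c)) • x t - exp (a * (s - c)) • x s‖ ≤ ∫ r in s..t, σ r := by
  set h : ℝ → E := fun r => K • exp (a * (r - c)) • x r
  have hh : ∀ r ∈ Icc s t,
      HasDerivAt h (K • exp (a * (r - c)) • (deriv x r + a • x r)) r := fun r hr =>
    (hasDerivAt_exp_smul_s8 (hx r hr)).const_smul K
  have hnorm : ∀ r ∈ Ioo s t, ‖deriv h r‖ ≤ σ r := fun r hr => by
    have hr' := Ioo_subset_Icc_self hr
    rw [(hh r hr').deriv, norm_smul, norm_smul, norm_of_nonneg hK, norm_of_nonneg (exp_nonneg _),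
      ← mul_assoc]
    exact hσ r hr'
  have key : ‖h t - h s‖ ≤ ∫ r in s..t, σ r :=
    norm_sub_le_integral_of_norm_deriv_le_of_le hst (HasDerivAt.continuousOn hh)
      (fun r hr => (hh r (Ioo_subset_Icc_self hr)).differentiableAt.differentiableWithinAt)
      (ae_of_all _ hnorm) hσi
  rwa [← smul_sub, norm_smul, norm_of_nonneg hK] at key

lemma weight_mul_norm_le_add_integral (hst : s ≤ t) (hw₀ : 0 ≤ w t)
    (hw : ∀ r ∈ Icc s t, w t ≤ exp (a * (t - r)) * w r)
    (hx : ∀ r ∈ Icc s t, DifferentiableAt ℝ x r)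
    (hσ : ∀ r ∈ Icc s t, w r * ‖deriv x r + a • x r‖ ≤ σ r)
    (hσi : IntervalIntegrable σ volume s t) :
    w t * ‖x t‖ ≤ w s * ‖x s‖ + ∫ r in s..t, σ r := by
  have hw' : ∀ r ∈ Icc s t, w t * exp (a * (r - t)) ≤ w r := fun r hr => by
    calc w t * exp (a * (r - t)) ≤ exp (a * (t - r)) * w r * exp (a * (r - t)) := by
          gcongr; exact hw r hr
      _ = w r := by rw [mul_right_comm, ← exp_add]; ring_nf; simp
  have hvar := mul_norm_exp_smul_sub_le_integral (a := a) (c := t) hw₀ hst hx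
    (fun r hr => (mul_le_mul_of_nonneg_right (hw' r hr) (norm_nonneg _)).trans (hσ r hr)) hσi
  simp only [sub_self, mul_zero, exp_zero, one_smul] at hvar
  calc w t * ‖x t‖
      ≤ w t * (‖exp (a * (s - t)) • x s‖ + ‖x t - exp (a * (s - t)) • x s‖) := by
        gcongr; exact norm_le_norm_add_norm_sub' _ _
    _ = w t * exp (a * (s - t)) * ‖x s‖ + w t * ‖x t - exp (a * (s - t)) • x s‖ := by
        rw [norm_smul, norm_of_nonneg (exp_nonneg _)]; ring
    _ ≤ w s * ‖x s‖ + ∫ r in s..t, σ r := by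
        gcongr; exact hw' s (left_mem_Icc.mpr hst)

lemma tendsto_exp_smul_atTop_zero {b B : ℝ} (hb : 0 < b) (hB : ∀ r ∈ Ici t, ‖x r‖ ≤ B) :
    Tendsto (fun r => exp (-b * (r - t)) • x r) atTop (nhds 0) := by
  have hexp : Tendsto (fun r => exp (-b * (r - t))) atTop (nhds 0) :=
    tendsto_exp_atBot.comp <|
      (tendsto_atTop_add_const_right _ (-t) tendsto_id).const_mul_atTop_of_neg (neg_lt_zero.mpr hb)
  refine squeeze_zero_norm' (a := fun r => exp (-b * (r - t)) * B) ?_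
    (by simpa using hexp.mul_const B)
  filter_upwards [eventually_ge_atTop t] with r hr
  rw [norm_smul, norm_of_nonneg (exp_nonneg _)]
  gcongr
  exact hB r hr

-- Boundedness removes the growing mode: the variation of constants formula is read from `∞`.
lemma weight_mul_norm_le_integral_Ioi {b B : ℝ} (hb : 0 < b) (hw₀ : 0 ≤ w t)
    (hw : MonotoneOn w (Ici t)) (hx : ∀ r ∈ Ici t, DifferentiableAt ℝ x r)
    (hB : ∀ r ∈ Ici t, ‖x r‖ ≤ B)
    (hσ : ∀ r ∈ Ici t, w r * ‖deriv x r - b • x r‖ ≤ σ r)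
    (hσi : IntegrableOn σ (Ioi t)) :
    w t * ‖x t‖ ≤ ∫ r in Ioi t, σ r := by
  have hvar : ∀ S ∈ Ici t, w t * ‖exp (-b * (S - t)) • x S - x t‖ ≤ ∫ r in t..S, σ r := by
    intro S hS
    have hσ' : ∀ r ∈ Icc t S, w t * exp (-b * (r - t)) * ‖deriv x r + -b • x r‖ ≤ σ r := by
      intro r hr
      have hexp : exp (-b * (r - t)) ≤ 1 := exp_le_one_iff.mpr (by nlinarith [hr.1])
      calc w t * exp (-b * (r - t)) * ‖deriv x r + -b • x r‖
          ≤ w t * 1 * ‖deriv x r + -b • x r‖ := by gcongr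
        _ ≤ w r * ‖deriv x r - b • x r‖ := by
          rw [mul_one, neg_smul, ← sub_eq_add_neg]
          gcongr
          exact hw self_mem_Ici hr.1 hr.1
        _ ≤ σ r := hσ r hr.1
    have hσS : IntervalIntegrable σ volume t S :=
      (intervalIntegrable_iff_integrableOn_Ioc_of_le hS).mpr (hσi.mono_set Ioc_subset_Ioi_self)
    simpa using mul_norm_exp_smul_sub_le_integral hw₀ hS (fun r hr => hx r hr.1) hσ' hσS
  refine le_of_tendsto_of_tendsto ?_
    (intervalIntegral_tendsto_integral_Ioi t hσi tendsto_id)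
    ((eventually_ge_atTop t).mono hvar)
  simpa using (((tendsto_exp_smul_atTop_zero hb hB).sub_const (x t)).norm).const_mul (w t)

lemma exists_tendsto_of_norm_deriv_le_s8 [CompleteSpace E]
    (hx : ∀ r ∈ Ioi t, DifferentiableAt ℝ x r) (hσ : ∀ r ∈ Ioi t, ‖deriv x r‖ ≤ σ r)
    (hσi : IntegrableOn σ (Ioi t)) :
    ∃ l, Tendsto x atTop (nhds l) :=
  ⟨_, tendsto_limUnder_of_hasDerivAt_of_integrableOn_Ioi (fun r hr => (hx r hr).hasDerivAt)
    (hσi.mono' (aestronglyMeasurable_deriv _ _) (ae_restrict_of_forall_mem measurableSet_Ioi hσ))⟩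

lemma exists_pos_integral_Ioi_le {ε : ℝ} (hε : 0 < ε) : ∃ T, 0 < T ∧ ∫ r in Ioi T, σ r ≤ ε :=
  ((eventually_gt_atTop 0).and
    ((tendsto_integral_Ioi_zero tendsto_id).eventually_le_const hε)).exists

end ExponentialWeights

/-- A bounded pair `(x, y)` on `[0, ∞)` solving the decoupled system `x' = -a x`, `y' = b y` up to
an error of size at most `ρ (‖x‖ + ‖y‖)`, where `ρ` is integrable. -/
structure IsPerturbedSaddle {E F : Type*} [NormedAddCommGroup E] [NormedSpace ℝ E]
    [NormedAddCommGroup F] [NormedSpace ℝ F] (a b : ℝ) (ρ : ℝ → ℝ) (x : ℝ → E) (y : ℝ → F) :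
    Prop where
  rate_nonneg : ∀ t, 0 ≤ t → 0 ≤ ρ t
  rate_integrableOn : IntegrableOn ρ (Ioi 0)
  differentiableAt_fst : ∀ t, 0 ≤ t → DifferentiableAt ℝ x t
  differentiableAt_snd : ∀ t, 0 ≤ t → DifferentiableAt ℝ y t
  norm_fst_le : ∀ t, 0 ≤ t → ‖deriv x t + a • x t‖ ≤ ρ t * (‖x t‖ + ‖y t‖)
  norm_snd_le : ∀ t, 0 ≤ t → ‖deriv y t - b • y t‖ ≤ ρ t * (‖x t‖ + ‖y t‖)
  bounded : ∃ B, ∀ t, 0 ≤ t → ‖x t‖ + ‖y t‖ ≤ B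

namespace IsPerturbedSaddle

variable {E F : Type*} [NormedAddCommGroup E] [NormedSpace ℝ E]
  [NormedAddCommGroup F] [NormedSpace ℝ F] {a b : ℝ} {ρ w : ℝ → ℝ} {x : ℝ → E} {y : ℝ → F}
  {N T t : ℝ}

lemma rate_integrableOn_Ioi (h : IsPerturbedSaddle a b ρ x y) (hT : 0 ≤ T) :
    IntegrableOn ρ (Ioi T) :=
  h.rate_integrableOn.mono_set (Ioi_subset_Ioi hT)

lemma weight_mul_rate_mul_le (h : IsPerturbedSaddle a b ρ x y) (ht : 0 ≤ t)
    (hN : w t * (‖x t‖ + ‖y t‖) ≤ N) : w t * (ρ t * (‖x t‖ + ‖y t‖)) ≤ N * ρ t := by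
  rw [mul_left_comm, mul_comm N]
  exact mul_le_mul_of_nonneg_left hN (h.rate_nonneg t ht)

lemma weight_mul_norm_fst_le (h : IsPerturbedSaddle a b ρ x y) (hw₀ : ∀ r, 0 ≤ w r)
    (hw : ∀ ⦃r s⦄, r ≤ s → w s ≤ exp (a * (s - r)) * w r) (hT : 0 ≤ T) (hTt : T ≤ t)
    (hN : ∀ r, T ≤ r → w r * (‖x r‖ + ‖y r‖) ≤ N) :
    w t * ‖x t‖ ≤ w T * ‖x T‖ + N * ∫ r in T..t, ρ r := by
  have hρ : IntervalIntegrable ρ volume T t :=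
    (intervalIntegrable_iff_integrableOn_Ioc_of_le hTt).mpr
      ((h.rate_integrableOn_Ioi hT).mono_set Ioc_subset_Ioi_self)
  rw [← intervalIntegral.integral_const_mul]
  exact weight_mul_norm_le_add_integral hTt (hw₀ t) (fun r hr => hw hr.2)
    (fun r hr => h.differentiableAt_fst r (hT.trans hr.1))
    (fun r hr => (mul_le_mul_of_nonneg_left (h.norm_fst_le r (hT.trans hr.1)) (hw₀ r)).trans
      (h.weight_mul_rate_mul_le (hT.trans hr.1) (hN r hr.1)))
    (hρ.const_mul N)

lemma weight_mul_norm_snd_le (h : IsPerturbedSaddle a b ρ x y) (hb : 0 < b)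
    (hw₀ : ∀ r, 0 ≤ w r) (hw : Monotone w) (ht : 0 ≤ t)
    (hN : ∀ r, t ≤ r → w r * (‖x r‖ + ‖y r‖) ≤ N) :
    w t * ‖y t‖ ≤ N * ∫ r in Ioi t, ρ r := by
  obtain ⟨B, hB⟩ := h.bounded
  rw [← integral_const_mul]
  exact weight_mul_norm_le_integral_Ioi hb (hw₀ t) (hw.monotoneOn _)
    (fun r hr => h.differentiableAt_snd r (ht.trans hr))
    (fun r hr => (le_add_of_nonneg_left (norm_nonneg _)).trans (hB r (ht.trans hr)))
    (fun r hr => (mul_le_mul_of_nonneg_left (h.norm_snd_le r (ht.trans hr)) (hw₀ r)).trans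
      (h.weight_mul_rate_mul_le (ht.trans hr) (hN r hr)))
    ((h.rate_integrableOn_Ioi ht).const_mul N)

lemma weight_mul_norm_le (h : IsPerturbedSaddle a b ρ x y) (hb : 0 < b) (hw₀ : ∀ r, 0 ≤ w r)
    (hw_mono : Monotone w) (hw : ∀ ⦃r s⦄, r ≤ s → w s ≤ exp (a * (s - r)) * w r)
    (hT : 0 ≤ T) (hTt : T ≤ t) (hN : ∀ r, T ≤ r → w r * (‖x r‖ + ‖y r‖) ≤ N) :
    w t * (‖x t‖ + ‖y t‖) ≤ w T * ‖x T‖ + N * ∫ r in Ioi T, ρ r := by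
  have hx := h.weight_mul_norm_fst_le hw₀ hw hT hTt hN
  have hy := h.weight_mul_norm_snd_le hb hw₀ hw_mono (hT.trans hTt) fun r hr => hN r (hTt.trans hr)
  have hsplit : (∫ r in T..t, ρ r) + ∫ r in Ioi t, ρ r = ∫ r in Ioi T, ρ r :=
    intervalIntegral.integral_interval_add_Ioi (h.rate_integrableOn_Ioi hT)
      (h.rate_integrableOn_Ioi (hT.trans hTt))
  rw [← hsplit]
  linarith

lemma weight_mul_norm_le_two_mul (h : IsPerturbedSaddle a b ρ x y) (hb : 0 < b)
    (hw₀ : ∀ r, 0 ≤ w r) (hw_mono : Monotone w)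
    (hw : ∀ ⦃r s⦄, r ≤ s → w s ≤ exp (a * (s - r)) * w r) (hw_bdd : BddAbove (range w))
    (hT : 0 ≤ T) (hρT : ∫ r in Ioi T, ρ r ≤ 1 / 2) (hTt : T ≤ t) :
    w t * (‖x t‖ + ‖y t‖) ≤ 2 * (w T * ‖x T‖) := by
  obtain ⟨B, hB⟩ := h.bounded
  obtain ⟨L, hL⟩ := hw_bdd
  obtain ⟨N, hN⟩ : ∃ N, IsLUB ((fun r => w r * (‖x r‖ + ‖y r‖)) '' Ici T) N := by
    refine Real.exists_isLUB (nonempty_Ici.image _) ⟨L * B, ?_⟩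
    rintro _ ⟨r, hr, rfl⟩
    exact mul_le_mul (hL (mem_range_self r)) (hB r (hT.trans hr)) (by positivity)
      ((hw₀ r).trans (hL (mem_range_self r)))
  have hN_le : ∀ r, T ≤ r → w r * (‖x r‖ + ‖y r‖) ≤ N := fun r hr => hN.1 ⟨r, hr, rfl⟩
  have hN₀ : 0 ≤ N := (mul_nonneg (hw₀ T) (by positivity)).trans (hN_le T le_rfl)
  have hN_self : N ≤ w T * ‖x T‖ + N * (1 / 2) := by
    refine hN.2 ?_
    rintro _ ⟨r, hr, rfl⟩
    exact (h.weight_mul_norm_le hb hw₀ hw_mono hw hT hr hN_le).trans (by gcongr)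
  linarith [hN_le t hTt]

-- The weight is frozen at the target time `t` so that it is bounded, as the bootstrap requires.
lemma exp_mul_norm_le (h : IsPerturbedSaddle a b ρ x y) (ha : 0 ≤ a) (hb : 0 < b)
    (hT : 0 ≤ T) (hρT : ∫ r in Ioi T, ρ r ≤ 1 / 2) (hTt : T ≤ t) :
    exp (a * t) * (‖x t‖ + ‖y t‖) ≤ 2 * (exp (a * T) * ‖x T‖) := by
  have hw_mono : Monotone fun r => exp (a * min r t) := fun r s hrs => by
    dsimp only; gcongr
  have hw : ∀ ⦃r s⦄, r ≤ s → exp (a * min s t) ≤ exp (a * (s - r)) * exp (a * min r t) := by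
    intro r s hrs
    rw [← exp_add, ← mul_add]
    gcongr
    grind
  have hw_bdd : BddAbove (range fun r => exp (a * min r t)) := by
    refine ⟨exp (a * t), ?_⟩
    rintro _ ⟨r, rfl⟩
    dsimp only
    gcongr
    exact min_le_right r t
  simpa [hTt] using h.weight_mul_norm_le_two_mul hb (fun r => exp_nonneg _) hw_mono hw hw_bdd
    hT hρT hTt

lemma eq_zero_of_fst_eq_zero (h : IsPerturbedSaddle a b ρ x y) (ha : 0 ≤ a) (hb : 0 < b)
    (hT : 0 ≤ T) (hρT : ∫ r in Ioi T, ρ r ≤ 1 / 2) (hxT : x T = 0) : y T = 0 := by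
  have hle := h.exp_mul_norm_le ha hb hT hρT le_rfl
  rw [hxT, norm_zero, zero_add, mul_zero, mul_zero] at hle
  exact norm_le_zero_iff.mp (nonpos_of_mul_nonpos_right hle (exp_pos _))

lemma exists_exp_mul_norm_le (h : IsPerturbedSaddle a b ρ x y) (ha : 0 ≤ a) (hb : 0 < b) :
    ∃ T N, 0 ≤ T ∧ ∀ t, T ≤ t → exp (a * t) * (‖x t‖ + ‖y t‖) ≤ N := by
  obtain ⟨T, hT, hρT⟩ := exists_pos_integral_Ioi_le (σ := ρ) one_half_pos
  exact ⟨T, _, hT.le, fun t ht => h.exp_mul_norm_le ha hb hT.le hρT ht⟩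

lemma exists_tendsto_exp_smul_fst [CompleteSpace E] (h : IsPerturbedSaddle a b ρ x y)
    (ha : 0 ≤ a) (hb : 0 < b) : ∃ l, Tendsto (fun t => exp (a * t) • x t) atTop (nhds l) := by
  obtain ⟨T, N, hT, hN⟩ := h.exists_exp_mul_norm_le ha hb
  have hderiv : ∀ t ∈ Ioi T, HasDerivAt (fun t => exp (a * t) • x t)
      (exp (a * t) • (deriv x t + a • x t)) t := fun t ht => by
    simpa using hasDerivAt_exp_smul_s8 (a := a) (c := 0)
      (h.differentiableAt_fst t (hT.trans (le_of_lt ht)))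
  refine exists_tendsto_of_norm_deriv_le_s8 (fun t ht => (hderiv t ht).differentiableAt)
    (fun t ht => ?_) ((h.rate_integrableOn_Ioi hT).const_mul N)
  have ht₀ : 0 ≤ t := hT.trans (le_of_lt ht)
  rw [(hderiv t ht).deriv, norm_smul, norm_of_nonneg (exp_nonneg _)]
  exact (mul_le_mul_of_nonneg_left (h.norm_fst_le t ht₀) (exp_nonneg _)).trans
    (h.weight_mul_rate_mul_le ht₀ (w := fun t => exp (a * t)) (hN t (le_of_lt ht)))

lemma tendsto_exp_smul_snd (h : IsPerturbedSaddle a b ρ x y) (ha : 0 ≤ a) (hb : 0 < b) :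
    Tendsto (fun t => exp (a * t) • y t) atTop (nhds 0) := by
  obtain ⟨T, N, hT, hN⟩ := h.exists_exp_mul_norm_le ha hb
  have hw_mono : Monotone fun t => exp (a * t) := fun s t hst => by
    dsimp only; gcongr
  refine squeeze_zero_norm' (a := fun t => N * ∫ r in Ioi t, ρ r) ?_
    (by simpa using (tendsto_integral_Ioi_zero (f := ρ) tendsto_id).const_mul N)
  filter_upwards [eventually_ge_atTop T] with t ht
  rw [norm_smul, norm_of_nonneg (exp_nonneg _)]
  exact h.weight_mul_norm_snd_le hb (fun r => exp_nonneg _) hw_mono (hT.trans ht)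
    fun r hr => hN r (ht.trans hr)

end IsPerturbedSaddle

section LinearSystems

lemma eq_zero_of_hasDerivAt_clm {V : Type*} [NormedAddCommGroup V] [NormedSpace ℝ V]
    {L : ℝ → V →L[ℝ] V} {φ : ℝ → V} {t₀ T : ℝ} (hL : ContinuousOn L (Ici t₀))
    (hφ : ∀ t ∈ Ici t₀, HasDerivAt φ (L t (φ t)) t) (hT : t₀ < T) (hφT : φ T = 0) :
    ∀ t ∈ Ici t₀, φ t = 0 := by
  intro t ht
  set S := max t T + 1
  have htS : t ∈ Icc t₀ S := ⟨ht, by grind⟩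
  have hTS : T ∈ Ioo t₀ S := ⟨hT, by grind⟩
  obtain ⟨C, hC⟩ := isCompact_Icc.exists_bound_of_continuousOn
    (hL.mono (Icc_subset_Ici_self : Icc t₀ S ⊆ Ici t₀))
  have hlip : ∀ r ∈ Ioo t₀ S, LipschitzOnWith C.toNNReal (L r) univ := fun r hr =>
    ((L r).lipschitz.weaken (NNReal.le_toNNReal_of_coe_le
      (hC r (Ioo_subset_Icc_self hr)))).lipschitzOnWith
  exact ODE_solution_unique_of_mem_Icc (v := fun r => L r) (g := fun _ => 0) hlip hTS
    (HasDerivAt.continuousOn fun r hr => hφ r hr.1) (fun r hr => hφ r hr.1.le)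
    (fun _ _ => mem_univ _) continuousOn_const
    (fun r _ => by simpa using hasDerivAt_const r (0 : V)) (fun _ _ => mem_univ _) hφT htS

variable {n : Type*} [Fintype n]

/-- The space of bounded solutions on `[0, ∞)` of `φ' = M(t) φ`. Its elements are functions on all
of `ℝ`, whose values at negative times are irrelevant. -/
def boundedSolutions (M : ℝ → Matrix n n ℝ) : Submodule ℝ (ℝ → n → ℝ) where
  carrier := {φ | (∀ t : ℝ, 0 ≤ t → HasDerivAt φ ((M t).mulVec (φ t)) t) ∧
    ∃ B : ℝ, ∀ t : ℝ, 0 ≤ t → ‖φ t‖ ≤ B}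
  zero_mem' := ⟨fun t _ => by simp [hasDerivAt_zero], 0, by simp⟩
  add_mem' := by
    rintro φ ψ ⟨hφ, B, hB⟩ ⟨hψ, C, hC⟩
    refine ⟨fun t ht => ?_, B + C, fun t ht => norm_add_le_of_le (hB t ht) (hC t ht)⟩
    simpa [Matrix.mulVec_add] using (hφ t ht).add (hψ t ht)
  smul_mem' := by
    rintro c φ ⟨hφ, B, hB⟩
    refine ⟨fun t ht => ?_, ‖c‖ * B, fun t ht => ?_⟩
    · simpa [Matrix.mulVec_smul] using (hφ t ht).const_smul c
    · simpa [norm_smul] using mul_le_mul_of_nonneg_left (hB t ht) (norm_nonneg c)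

lemma eq_zero_of_mem_boundedSolutions {M : ℝ → Matrix n n ℝ} {φ : ℝ → n → ℝ} {T : ℝ}
    (hM : ContinuousOn M (Ici 0)) (hφ : φ ∈ boundedSolutions M) (hT : 0 < T) (hφT : φ T = 0) :
    ∀ t, 0 ≤ t → φ t = 0 := by
  classical
  let toCLM : Matrix n n ℝ →ₗ[ℝ] (n → ℝ) →L[ℝ] n → ℝ :=
    LinearMap.toContinuousLinearMap.toLinearMap ∘ₗ Matrix.toLin'.toLinearMap
  exact eq_zero_of_hasDerivAt_clm
    (toCLM.continuous_of_finiteDimensional.comp_continuousOn hM) hφ.1 hT hφT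

lemma repr_mulVec_of_forall_eigenvector {A : Matrix n n ℝ} {lam : n → ℝ}
    (p : Module.Basis n ℝ (n → ℝ)) (hp : ∀ i, A.mulVec (p i) = lam i • p i) (v : n → ℝ) (i : n) :
    p.repr (A.mulVec v) i = lam i * p.repr v i := by
  classical
  have hcoord : p.coord i ∘ₗ A.mulVecLin = lam i • p.coord i := p.ext fun j => by
    by_cases hij : j = i <;> simp [hp, hij]
  exact LinearMap.congr_fun hcoord v

lemma exists_basis_of_eigenvectors {A : Matrix n n ℝ} {lam : n → ℝ} {p : n → n → ℝ}
    (hlam : Function.Injective lam) (hp : ∀ i, p i ≠ 0)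
    (heig : ∀ i, A.mulVec (p i) = lam i • p i) :
    ∃ b : Module.Basis n ℝ (n → ℝ), ⇑b = p := by
  have hind : LinearIndependent ℝ p :=
    Module.End.eigenvectors_linearIndependent' A.mulVecLin lam hlam p fun i =>
      Module.End.hasEigenvector_iff.mpr ⟨Module.End.mem_eigenspace_iff.mpr (heig i), hp i⟩
  exact ⟨basisOfLinearIndependentOfCardEqFinrank' p hind (by simp), by simp⟩

lemma hasDerivAt_repr_of_mem_boundedSolutions {A : Matrix n n ℝ} {lam : n → ℝ}
    {R : ℝ → Matrix n n ℝ} {φ : ℝ → n → ℝ} {t : ℝ} (p : Module.Basis n ℝ (n → ℝ))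
    (hp : ∀ i, A.mulVec (p i) = lam i • p i) (hφ : φ ∈ boundedSolutions fun t => A + R t)
    (ht : 0 ≤ t) (i : n) :
    HasDerivAt (fun t => p.repr (φ t) i)
      (lam i * p.repr (φ t) i + p.repr ((R t).mulVec (φ t)) i) t := by
  have hcoord := (LinearMap.toContinuousLinearMap (p.coord i)).hasFDerivAt.comp_hasDerivAt t
    (hφ.1 t ht)
  refine hcoord.congr_deriv ?_
  simp [Matrix.add_mulVec, repr_mulVec_of_forall_eigenvector p hp]

end LinearSystems

lemma matNorm_nonneg (M : Matrix (Fin 2) (Fin 2) ℝ) : 0 ≤ matNorm M := by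
  unfold matNorm; positivity

lemma norm_mulVec_le_matNorm_mul (M : Matrix (Fin 2) (Fin 2) ℝ) (v : Fin 2 → ℝ) :
    ‖M.mulVec v‖ ≤ matNorm M * ‖v‖ := by
  refine (pi_norm_le_iff_of_nonneg (mul_nonneg (matNorm_nonneg M) (norm_nonneg v))).mpr fun i => ?_
  calc ‖M.mulVec v i‖ ≤ ∑ j, ‖M i j * v j‖ := norm_sum_le Finset.univ fun j => M i j * v j
    _ ≤ ∑ j, |M i j| * ‖v‖ := by
      gcongr with j
      rw [norm_mul, norm_eq_abs]
      gcongr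
      exact norm_le_pi_norm v j
    _ = (∑ j, |M i j|) * ‖v‖ := (Finset.sum_mul ..).symm
    _ ≤ matNorm M * ‖v‖ := by
      gcongr
      exact Finset.single_le_sum (f := fun i => ∑ j, |M i j|)
        (fun _ _ => by positivity) (Finset.mem_univ i)

section EigenvectorCoordinates

variable {A : Matrix (Fin 2) (Fin 2) ℝ} {lam : Fin 2 → ℝ} {R : ℝ → Matrix (Fin 2) (Fin 2) ℝ}
  {φ ψ : ℝ → Fin 2 → ℝ} (p : Module.Basis (Fin 2) ℝ (Fin 2 → ℝ))

lemma exists_norm_repr_mulVec_le :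
    ∃ κ, 0 ≤ κ ∧ ∀ (M : Matrix (Fin 2) (Fin 2) ℝ) v i,
      ‖p.repr (M.mulVec v) i‖ ≤ κ * matNorm M * (‖p.repr v 0‖ + ‖p.repr v 1‖) := by
  let e : (Fin 2 → ℝ) →L[ℝ] Fin 2 → ℝ := p.equivFunL
  let e' : (Fin 2 → ℝ) →L[ℝ] Fin 2 → ℝ := p.equivFunL.symm
  have he' : ∀ v, e' (e v) = v := p.equivFunL.symm_apply_apply
  refine ⟨‖e‖ * ‖e'‖, by positivity, fun M v i => ?_⟩
  have hM := matNorm_nonneg M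
  have hv : ‖e v‖ ≤ ‖p.repr v 0‖ + ‖p.repr v 1‖ :=
    (pi_norm_le_iff_of_nonneg (by positivity)).mpr <|
      Fin.forall_fin_two.mpr ⟨le_add_of_nonneg_right (norm_nonneg _),
        le_add_of_nonneg_left (norm_nonneg _)⟩
  calc ‖p.repr (M.mulVec v) i‖ ≤ ‖e (M.mulVec v)‖ := norm_le_pi_norm (e (M.mulVec v)) i
    _ ≤ ‖e‖ * (matNorm M * ‖e' (e v)‖) := by
      rw [he']
      exact e.le_opNorm_of_le (norm_mulVec_le_matNorm_mul M v)
    _ ≤ ‖e‖ * (matNorm M * (‖e'‖ * (‖p.repr v 0‖ + ‖p.repr v 1‖))) := by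
      gcongr
      exact e'.le_opNorm_of_le hv
    _ = ‖e‖ * ‖e'‖ * matNorm M * (‖p.repr v 0‖ + ‖p.repr v 1‖) := by ring

lemma exists_norm_repr_le (hφ : ∃ B, ∀ t, 0 ≤ t → ‖φ t‖ ≤ B) :
    ∃ B, ∀ t, 0 ≤ t → ‖p.repr (φ t) 0‖ + ‖p.repr (φ t) 1‖ ≤ B := by
  obtain ⟨B, hB⟩ := hφ
  let e : (Fin 2 → ℝ) →L[ℝ] Fin 2 → ℝ := p.equivFunL
  have hcoord : ∀ t, 0 ≤ t → ∀ i, ‖p.repr (φ t) i‖ ≤ ‖e‖ * B := fun t ht i =>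
    (norm_le_pi_norm (e (φ t)) i).trans (e.le_opNorm_of_le (hB t ht))
  exact ⟨_, fun t ht => add_le_add (hcoord t ht 0) (hcoord t ht 1)⟩

lemma exists_isPerturbedSaddle_repr (hp : ∀ i, A.mulVec (p i) = lam i • p i)
    (hR : IntegrableOn (fun t => matNorm (R t)) (Ici 0)) :
    ∃ ρ, ∀ φ ∈ boundedSolutions fun t => A + R t, IsPerturbedSaddle (-lam 0) (lam 1) ρ
      (fun t => p.repr (φ t) 0) (fun t => p.repr (φ t) 1) := by
  obtain ⟨κ, hκ, hκR⟩ := exists_norm_repr_mulVec_le p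
  refine ⟨fun t => κ * matNorm (R t), fun φ hφ => ?_⟩
  have hderiv := fun t (ht : 0 ≤ t) => hasDerivAt_repr_of_mem_boundedSolutions p hp hφ ht
  exact
    { rate_nonneg := fun t _ => mul_nonneg hκ (matNorm_nonneg _)
      rate_integrableOn := (hR.mono_set Ioi_subset_Ici_self).const_mul κ
      differentiableAt_fst := fun t ht => (hderiv t ht 0).differentiableAt
      differentiableAt_snd := fun t ht => (hderiv t ht 1).differentiableAt
      norm_fst_le := fun t ht => by
        simpa [(hderiv t ht 0).deriv] using hκR (R t) (φ t) 0
      norm_snd_le := fun t ht => by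
        simpa [(hderiv t ht 1).deriv] using hκR (R t) (φ t) 1
      bounded := exists_norm_repr_le p hφ.2 }

lemma exists_smul_add_smul_eq_zero_of_mem_boundedSolutions
    (hp : ∀ i, A.mulVec (p i) = lam i • p i) (hlam₀ : lam 0 ≤ 0) (hlam₁ : 0 < lam 1)
    (hRcont : ContinuousOn R (Ici 0)) (hRint : IntegrableOn (fun t => matNorm (R t)) (Ici 0))
    (hφ : φ ∈ boundedSolutions fun t => A + R t) (hψ : ψ ∈ boundedSolutions fun t => A + R t) :
    ∃ c₁ c₂ : ℝ, ¬(c₁ = 0 ∧ c₂ = 0) ∧ ∀ t, 0 ≤ t → c₁ • φ t + c₂ • ψ t = 0 := by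
  obtain ⟨ρ, hρ⟩ := exists_isPerturbedSaddle_repr p hp hRint
  obtain ⟨T, hT, hρT⟩ := exists_pos_integral_Ioi_le (σ := ρ) one_half_pos
  obtain ⟨c₁, c₂, hc, hcT⟩ : ∃ c₁ c₂ : ℝ, ¬(c₁ = 0 ∧ c₂ = 0) ∧
      c₁ * p.repr (φ T) 0 + c₂ * p.repr (ψ T) 0 = 0 := by
    by_cases hφT : p.repr (φ T) 0 = 0
    · exact ⟨1, 0, by simp, by simp [hφT]⟩
    · exact ⟨-p.repr (ψ T) 0, p.repr (φ T) 0, by simp [hφT], by ring⟩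
  have hχ : c₁ • φ + c₂ • ψ ∈ boundedSolutions fun t => A + R t :=
    add_mem (Submodule.smul_mem _ c₁ hφ) (Submodule.smul_mem _ c₂ hψ)
  have hfst : p.repr ((c₁ • φ + c₂ • ψ) T) 0 = 0 := by simpa using hcT
  have hsnd : p.repr ((c₁ • φ + c₂ • ψ) T) 1 = 0 :=
    (hρ _ hχ).eq_zero_of_fst_eq_zero (neg_nonneg.mpr hlam₀) hlam₁ hT.le hρT hfst
  have hχT : (c₁ • φ + c₂ • ψ) T = 0 :=
    p.ext_elem <| Fin.forall_fin_two.mpr ⟨by rw [hfst]; simp, by rw [hsnd]; simp⟩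
  exact ⟨c₁, c₂, hc, eq_zero_of_mem_boundedSolutions (continuousOn_const.add hRcont) hχ hT hχT⟩

lemma exists_tendsto_exp_smul_of_mem_boundedSolutions
    (hp : ∀ i, A.mulVec (p i) = lam i • p i) (hlam₀ : lam 0 ≤ 0) (hlam₁ : 0 < lam 1)
    (hRint : IntegrableOn (fun t => matNorm (R t)) (Ici 0))
    (hφ : φ ∈ boundedSolutions fun t => A + R t) :
    ∃ c : ℝ, Tendsto (fun t => exp (-(lam 0) * t) • φ t) atTop (nhds (c • p 0)) := by
  obtain ⟨ρ, hρ⟩ := exists_isPerturbedSaddle_repr p hp hRint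
  obtain ⟨c, hc⟩ := (hρ φ hφ).exists_tendsto_exp_smul_fst (neg_nonneg.mpr hlam₀) hlam₁
  have hsnd := (hρ φ hφ).tendsto_exp_smul_snd (neg_nonneg.mpr hlam₀) hlam₁
  have hdecomp : ∀ t, exp (-(lam 0) * t) • φ t =
      (exp (-(lam 0) * t) • p.repr (φ t) 0) • p 0 +
        (exp (-(lam 0) * t) • p.repr (φ t) 1) • p 1 := fun t => by
    rw [smul_assoc, smul_assoc, ← smul_add, ← Fin.sum_univ_two fun i => p.repr (φ t) i • p i,
      p.sum_repr]
  refine ⟨c, ?_⟩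
  simpa only [← hdecomp, zero_smul, add_zero] using
    (hc.smul_const (p 0)).add (hsnd.smul_const (p 1))

end EigenvectorCoordinates

theorem bounded_solutions_of_perturbed_hyperbolic_system_general
    {A : Matrix (Fin 2) (Fin 2) ℝ} {lam : Fin 2 → ℝ} {p : Fin 2 → Fin 2 → ℝ}
    (hlam₀ : lam 0 ≤ 0) (hlam₁ : 0 < lam 1) (hp : ∀ i, p i ≠ 0)
    (heig : ∀ i, A.mulVec (p i) = lam i • p i) {R : ℝ → Matrix (Fin 2) (Fin 2) ℝ}
    (hRcont : ContinuousOn R (Ici 0)) (hRint : IntegrableOn (fun t => matNorm (R t)) (Ici 0)) :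
    (∀ φ ∈ boundedSolutions fun t => A + R t, ∀ ψ ∈ boundedSolutions fun t => A + R t,
        ∃ c₁ c₂ : ℝ, ¬(c₁ = 0 ∧ c₂ = 0) ∧ ∀ t : ℝ, 0 ≤ t → c₁ • φ t + c₂ • ψ t = 0) ∧
    (∀ φ ∈ boundedSolutions fun t => A + R t,
        ∃ c : ℝ, Tendsto (fun t => exp (-(lam 0) * t) • φ t) atTop (nhds (c • p 0))) := by
  have hinj : Function.Injective lam := by
    have hne : lam 0 ≠ lam 1 := (hlam₀.trans_lt hlam₁).ne
    simp [Function.Injective, Fin.forall_fin_two, hne, hne.symm]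
  obtain ⟨p, rfl⟩ := exists_basis_of_eigenvectors hinj hp heig
  exact ⟨fun φ hφ ψ hψ => exists_smul_add_smul_eq_zero_of_mem_boundedSolutions p heig hlam₀ hlam₁
      hRcont hRint hφ hψ,
    fun φ hφ => exists_tendsto_exp_smul_of_mem_boundedSolutions p heig hlam₀ hlam₁ hRint hφ⟩

/-- For a constant hyperbolic matrix `A` (eigenvalues `λ₁ < 0 < λ₂`, eigenvectors
`p₁, p₂`) and an integrable continuous perturbation `R`, the bounded solutions of
`φ′ = (A + R(t))φ` on `[0,∞)` form a space of dimension at most one, and every bounded solution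
satisfies `e^{−λ₁ t} φ(t) → c p₁` for some `c ∈ ℝ`. -/
theorem bounded_solutions_of_perturbed_hyperbolic_system
    (A : Matrix (Fin 2) (Fin 2) ℝ) (lam : Fin 2 → ℝ) (p : Fin 2 → Fin 2 → ℝ)
    (hlam1 : lam 0 < 0) (hlam2 : 0 < lam 1)
    (hp : ∀ i, p i ≠ 0)
    (heig : ∀ i, A.mulVec (p i) = lam i • p i)
    (R : ℝ → Matrix (Fin 2) (Fin 2) ℝ)
    (hRcont : ∀ i j : Fin 2, ContinuousOn (fun t => R t i j) (Set.Ici 0))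
    (hRint : IntegrableOn (fun t => matNorm (R t)) (Set.Ici 0)) :
    (∀ φ ψ : ℝ → (Fin 2 → ℝ),
        (∀ t : ℝ, 0 ≤ t → HasDerivAt φ ((A + R t).mulVec (φ t)) t) →
        (∃ B : ℝ, ∀ t : ℝ, 0 ≤ t → ‖φ t‖ ≤ B) →
        (∀ t : ℝ, 0 ≤ t → HasDerivAt ψ ((A + R t).mulVec (ψ t)) t) →
        (∃ B : ℝ, ∀ t : ℝ, 0 ≤ t → ‖ψ t‖ ≤ B) →
        ∃ c₁ c₂ : ℝ, ¬(c₁ = 0 ∧ c₂ = 0) ∧ ∀ t : ℝ, 0 ≤ t → c₁ • φ t + c₂ • ψ t = 0) ∧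
    (∀ φ : ℝ → (Fin 2 → ℝ),
        (∀ t : ℝ, 0 ≤ t → HasDerivAt φ ((A + R t).mulVec (φ t)) t) →
        (∃ B : ℝ, ∀ t : ℝ, 0 ≤ t → ‖φ t‖ ≤ B) →
        ∃ c : ℝ, Tendsto (fun t => Real.exp (-(lam 0) * t) • φ t) atTop (nhds (c • p 0))) := by
  have h := bounded_solutions_of_perturbed_hyperbolic_system_general hlam1.le hlam2 hp heig
    (continuousOn_pi.mpr fun i => continuousOn_pi.mpr (hRcont i)) hRint
  exact ⟨fun φ ψ hφ hφB hψ hψB => h.1 φ ⟨hφ, hφB⟩ ψ ⟨hψ, hψB⟩, fun φ hφ hφB => h.2 φ ⟨hφ, hφB⟩⟩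
end
end
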